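/- There exists a constant C > 0 such that for i = 1,2 and every x = (x₁,x₂,a) ∈ G with r(x) ≥ 1, one has sup_{t>0} |X_i p_t(x)| ≤ C |x| / (a · r(x)² · cosh² r(x)). -/

import Mathlib

open MeasureTheory Real Filter Set
open scoped ENNReal

noncomputable section

/-- The group `G = ℝ² ⋊ ℝ⁺`, realized as triples `(x₁, x₂, a)` (only `a > 0` is relevant). -/
abbrev G : Type := ℝ × ℝ × ℝ

/-- Group product `(x₁,x₂,a)·(x₁',x₂',a') = (x₁+a x₁', x₂+a x₂', a a')`. -/
def gMul (x y : G) : G := (x.1 + x.2.2 * y.1, x.2.1 + x.2.2 * y.2.1, x.2.2 * y.2.2)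

/-- Group inverse `(x₁,x₂,a)⁻¹ = (−x₁/a, −x₂/a, 1/a)`. -/
def gInv (x : G) : G := (-x.1 / x.2.2, -x.2.1 / x.2.2, 1 / x.2.2)

/-- The identity `e = (0,0,1)`. -/
def gE : G := (0, 0, 1)

/-- The right Haar measure `dρ = a⁻¹ dx₁ dx₂ da` (supported where `a > 0`). -/
def ρG : Measure G :=
  (volume : Measure G).withDensity fun x => ENNReal.ofReal (if 0 < x.2.2 then x.2.2⁻¹ else 0)

/-- The modular function `δ(x₁,x₂,a) = a⁻²`. -/
def deltaG (x : G) : ℝ := (x.2.2 ^ 2)⁻¹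

/-- `|x| = √(x₁² + x₂²)`. -/
def normG (x : G) : ℝ := Real.sqrt (x.1 ^ 2 + x.2.1 ^ 2)

/-- `cosh r(x) = (a + a⁻¹ + a⁻¹|x|²)/2`. -/
def coshArg (x : G) : ℝ := (x.2.2 + x.2.2⁻¹ + x.2.2⁻¹ * (x.1 ^ 2 + x.2.1 ^ 2)) / 2

/-- `r(x) ≥ 0` is determined by `cosh r(x) = coshArg x`; explicitly `r = arcosh (coshArg x)`. -/
def rG (x : G) : ℝ := Real.log (coshArg x + Real.sqrt (coshArg x ^ 2 - 1))

/-- The left-invariant distance `d(x,y) = r(x⁻¹y)`. -/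
def dG (x y : G) : ℝ := rG (gMul (gInv x) y)

/-- The heat kernel
`p_t(x) = (8π^{3/2})⁻¹ δ(x)^{1/2} (r(x)/sinh r(x)) t^{−3/2} exp(−r(x)²/(4t))`,
with `r/sinh r := 1` at `x = e`. -/
def heatK (t : ℝ) (x : G) : ℝ :=
  (8 * Real.pi ^ ((3 : ℝ)/2))⁻¹ * Real.sqrt (deltaG x) *
    (if rG x = 0 then 1 else rG x / Real.sinh (rG x)) *
    t ^ (-(3 : ℝ)/2) * Real.exp (-(rG x ^ 2) / (4 * t))

/-- Convolution `f ∗ p_t(x) = ∫ f(xy⁻¹) p_t(y) dρ(y)`. -/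
def convHeat (f : G → ℝ) (t : ℝ) (x : G) : ℝ := ∫ y, f (gMul x (gInv y)) * heatK t y ∂ρG

/-- The heat maximal operator `Mf(x) = sup_{t>0} |f ∗ p_t(x)|` (valued in `ℝ≥0∞`). -/
def maxHeat (f : G → ℝ) (x : G) : ℝ≥0∞ :=
  ⨆ (t : ℝ) (_ : 0 < t), ENNReal.ofReal |convHeat f t x|

/-- Calderón–Zygmund sets. -/
def IsCZ (R : Set G) : Prop :=
  ∃ c : G, ∃ L r : ℝ, 0 < c.2.2 ∧ 0 < L ∧ 0 < r ∧
    R = Set.Icc (c.1 - L/2) (c.1 + L/2) ×ˢ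
        (Set.Icc (c.2.1 - L/2) (c.2.1 + L/2) ×ˢ
         Set.Icc (c.2.2 * Real.exp (-r)) (c.2.2 * Real.exp r)) ∧
    (r < 1 → Real.exp 2 * c.2.2 * r ≤ L ∧ L < Real.exp 8 * c.2.2 * r) ∧
    (1 ≤ r → c.2.2 * Real.exp (2*r) ≤ L ∧ L < c.2.2 * Real.exp (8*r))

/-- Atoms: `A ∈ L¹(ρ)` supported in a Calderón–Zygmund set `R`, with
`‖A‖_∞ ≤ ρ(R)⁻¹` and `∫ A dρ = 0`. -/
def IsAtomG (A : G → ℝ) : Prop :=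
  Integrable A ρG ∧
  ∃ R : Set G, IsCZ R ∧ (∀ x ∉ R, A x = 0) ∧
    eLpNorm A ⊤ ρG ≤ (ρG R)⁻¹ ∧
    ∫ x, A x ∂ρG = 0

/-- `f = Σ_j lam_j A_j` with atoms `A_j`, `Σ_j |lam_j| < ∞`, converging in `L¹(ρ)`. -/
def IsH1Decomp (f : G → ℝ) (lam : ℕ → ℝ) (A : ℕ → G → ℝ) : Prop :=
  (∀ j, IsAtomG (A j)) ∧ Summable (fun j => |lam j|) ∧
  Tendsto (fun N => eLpNorm (fun x => f x - ∑ j ∈ Finset.range N, lam j * A j x) 1 ρG)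
    atTop (nhds 0)

/-- The Hardy space `H¹`. -/
def MemH1 (f : G → ℝ) : Prop :=
  Integrable f ρG ∧ ∃ lam A, IsH1Decomp f lam A

/-- `‖f‖_{H¹} = inf Σ_j |lam_j|` over all atomic decompositions. -/
def H1norm (f : G → ℝ) : ℝ :=
  sInf {s | ∃ lam A, IsH1Decomp f lam A ∧ s = ∑' j, |lam j|}

/-- The left-invariant vector field `X₀ = a ∂_a`. -/
def X0 (f : G → ℝ) (x : G) : ℝ := x.2.2 * deriv (fun s => f (x.1, x.2.1, s)) x.2.2

/-- The left-invariant vector field `X₁ = a ∂_{x₁}`. -/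
def X1 (f : G → ℝ) (x : G) : ℝ := x.2.2 * deriv (fun s => f (s, x.2.1, x.2.2)) x.1

/-- The left-invariant vector field `X₂ = a ∂_{x₂}`. -/
def X2 (f : G → ℝ) (x : G) : ℝ := x.2.2 * deriv (fun s => f (x.1, s, x.2.2)) x.2.1

/-- `‖∇p_t(x)‖`, the Euclidean norm of `(X₀p_t, X₁p_t, X₂p_t)` at `x`. -/
def gradHeatNorm (t : ℝ) (x : G) : ℝ :=
  Real.sqrt (X0 (heatK t) x ^ 2 + X1 (heatK t) x ^ 2 + X2 (heatK t) x ^ 2)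

/-- The Poisson kernel `q_t(x) = π⁻² δ(x)^{1/2} (r(x)/sinh r(x)) · t/(t²+r(x)²)²`. -/
def poissonK (t : ℝ) (x : G) : ℝ :=
  (Real.pi ^ 2)⁻¹ * Real.sqrt (deltaG x) *
    (if rG x = 0 then 1 else rG x / Real.sinh (rG x)) *
    (t / (t ^ 2 + rG x ^ 2) ^ 2)

/-- Convolution `f ∗ q_t(x) = ∫ f(xy⁻¹) q_t(y) dρ(y)`. -/
def convPoisson (f : G → ℝ) (t : ℝ) (x : G) : ℝ := ∫ y, f (gMul x (gInv y)) * poissonK t y ∂ρG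

/-- The Poisson maximal operator `M̃f(x) = sup_{t>0} |f ∗ q_t(x)|`. -/
def maxPoisson (f : G → ℝ) (x : G) : ℝ≥0∞ :=
  ⨆ (t : ℝ) (_ : 0 < t), ENNReal.ofReal |convPoisson f t x|

/-- `G_{r₁}(x) = sup_{z ∈ B(x,r₁/2)} sup_{t>0} ‖∇p_t(z)‖`. -/
def Gsup (r1 : ℝ) (x : G) : ℝ≥0∞ :=
  ⨆ (z : G) (_ : 0 < z.2.2 ∧ dG x z < r1 / 2) (t : ℝ) (_ : 0 < t),
    ENNReal.ofReal (gradHeatNorm t z)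

/-- `R₀ = [−1,1]×[−1,1]×[e⁻¹,e]`. -/
def R0set : Set G :=
  Set.Icc (-1 : ℝ) 1 ×ˢ (Set.Icc (-1 : ℝ) 1 ×ˢ Set.Icc (Real.exp (-1)) (Real.exp 1))

/-- `R_L = [L−1,L+1]×[−1,1]×[e⁻¹,e]`. -/
def RLset (L : ℝ) : Set G :=
  Set.Icc (L - 1) (L + 1) ×ˢ (Set.Icc (-1 : ℝ) 1 ×ˢ Set.Icc (Real.exp (-1)) (Real.exp 1))

/-- `f_L = χ_{R_L} − χ_{R₀}`. -/
def fL (L : ℝ) : G → ℝ := fun x =>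
  (RLset L).indicator (fun _ => (1 : ℝ)) x - R0set.indicator (fun _ => (1 : ℝ)) x

/-- The mean of `g` over `R` with respect to `ρ`. -/
def czMean (g : G → ℝ) (R : Set G) : ℝ := (∫ x in R, g x ∂ρG) / (ρG R).toReal

/-- `‖g‖_{BMO} = sup_R ρ(R)⁻¹ ∫_R |g − g_R| dρ` over Calderón–Zygmund sets `R`. -/
def czBMO (g : G → ℝ) : ℝ≥0∞ :=
  ⨆ (R : Set G) (_ : IsCZ R),
    (ρG R)⁻¹ * ∫⁻ x in R, ENNReal.ofReal |g x - czMean g R| ∂ρG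

/-- `‖h‖_{BMO(ℝ)} = sup_Q |Q|⁻¹ ∫_Q |h − h_Q|` over bounded intervals `Q ⊂ ℝ`. -/
def lineBMO (h : ℝ → ℝ) : ℝ≥0∞ :=
  ⨆ (a : ℝ) (b : ℝ) (_ : a < b),
    (ENNReal.ofReal (b - a))⁻¹ *
      ∫⁻ s in Set.Icc a b, ENNReal.ofReal |h s - (∫ u in Set.Icc a b, h u) / (b - a)|

/-- `2R₀ = [−2,2]×[−2,2]×[e⁻²,e²]`. -/
def twoR0set : Set G :=
  Set.Icc (-2 : ℝ) 2 ×ˢ (Set.Icc (-2 : ℝ) 2 ×ˢ Set.Icc (Real.exp (-2)) (Real.exp 2))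

/-- The set `{x₁ > 3, |x₂| < 1, e⁻¹ < a < e}`. -/
def domSpecial : Set G :=
  {x : G | 3 < x.1 ∧ |x.2.1| < 1 ∧ Real.exp (-1) < x.2.2 ∧ x.2.2 < Real.exp 1}

/-- The function equal to `1/(x₁ (log x₁)^{3/2})` on `{x₁ > 3, |x₂| < 1, e⁻¹ < a < e}`,
to `c₀` on `R₀`, and `0` elsewhere. -/
def fSpecial (c0 : ℝ) : G → ℝ := fun x =>
  domSpecial.indicator (fun y => (y.1 * Real.log y.1 ^ ((3 : ℝ)/2))⁻¹) x
    + R0set.indicator (fun _ => c0) x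

/-!
Up to the factor `δ^{1/2}`, which does not depend on `x₁, x₂`, the heat kernel is a function `h_t`
of `r` alone, and `∂_{x₁} cosh r = x₁ / a`, so that `X₁ p_t = (x₁ / a) · h_t'(r) / sinh r`.
The logarithmic derivative of `r / sinh r` lies in `[-1, 1]` and that of `exp (-r² / (4t))` is
`-r / (2t)`; hence `|h_t'| ≤ (1 + r / (2t)) h_t`. Maximizing `t^{-s} exp (-r² / (4t))` over `t`,
with `s = 3/2` and `s = 5/2`, yields `|X₁ p_t| ≲ (1 + 1/r) |x₁| / (a r² sinh² r)` everywhere off the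
identity. Away from it `1/r` is bounded and `sinh r` is comparable to `cosh r`.
-/

theorem rpow_neg_mul_exp_neg_div_le {s b t : ℝ} (hs : 0 ≤ s) (hb : 0 < b) (ht : 0 < t) :
    t ^ (-s) * exp (-(b / t)) ≤ (s / b) ^ s := by
  have h := ProbabilityTheory.rpow_abs_le_mul_exp_abs t⁻¹ hs hb.ne'
  rw [abs_of_pos (inv_pos.2 ht), abs_of_pos hb, inv_rpow ht.le,
    ← rpow_neg ht.le, ← div_eq_mul_inv] at h
  rwa [exp_neg, ← div_eq_mul_inv, div_le_iff₀ (exp_pos _)]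

theorem rpow_neg_mul_exp_neg_sq_div_le {s r t : ℝ} (hs : 0 ≤ s) (hr : 0 < r) (ht : 0 < t) :
    t ^ (-s) * exp (-(r ^ 2) / (4 * t)) ≤ (4 * s) ^ s / r ^ (2 * s) := by
  calc t ^ (-s) * exp (-(r ^ 2) / (4 * t))
      = t ^ (-s) * exp (-(r ^ 2 / 4 / t)) := by rw [neg_div, div_div]
    _ ≤ (s / (r ^ 2 / 4)) ^ s := rpow_neg_mul_exp_neg_div_le hs (by positivity) ht
    _ = (4 * s / r ^ 2) ^ s := by rw [div_div_eq_mul_div, mul_comm s]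
    _ = (4 * s) ^ s / r ^ (2 * s) := by
      rw [div_rpow (by positivity) (by positivity), rpow_mul hr.le, rpow_two]

theorem one_add_mul_rpow_mul_exp_neg_sq_div_le {r t : ℝ} (hr : 0 < r) (ht : 0 < t) :
    (1 + r / (2 * t)) * (t ^ (-(3 : ℝ) / 2) * exp (-(r ^ 2) / (4 * t))) ≤
      10 ^ (5 / 2 : ℝ) * (1 + r⁻¹) / r ^ 3 := by
  set E := exp (-(r ^ 2) / (4 * t))
  have h₃ : t ^ (-(3 : ℝ) / 2) * E ≤ 10 ^ (5 / 2 : ℝ) / r ^ 3 := by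
    calc t ^ (-(3 : ℝ) / 2) * E = t ^ (-(3 / 2 : ℝ)) * E := by rw [neg_div]
      _ ≤ (4 * (3 / 2)) ^ (3 / 2 : ℝ) / r ^ (2 * (3 / 2) : ℝ) :=
        rpow_neg_mul_exp_neg_sq_div_le (by norm_num) hr ht
      _ = 6 ^ (3 / 2 : ℝ) / r ^ 3 := by rw [← rpow_natCast]; norm_num
      _ ≤ 10 ^ (5 / 2 : ℝ) / r ^ 3 := by
        gcongr
        exact (rpow_le_rpow (by norm_num) (by norm_num) (by norm_num)).trans
          (rpow_le_rpow_of_exponent_le (by norm_num) (by norm_num))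
  have h₅ : t ^ (-(3 : ℝ) / 2) / t * E ≤ 10 ^ (5 / 2 : ℝ) / r ^ 5 := by
    calc t ^ (-(3 : ℝ) / 2) / t * E = t ^ (-(5 / 2 : ℝ)) * E := by
          rw [← rpow_sub_one ht.ne']; norm_num
      _ ≤ (4 * (5 / 2)) ^ (5 / 2 : ℝ) / r ^ (2 * (5 / 2) : ℝ) :=
        rpow_neg_mul_exp_neg_sq_div_le (by norm_num) hr ht
      _ = 10 ^ (5 / 2 : ℝ) / r ^ 5 := by rw [← rpow_natCast r 5]; norm_num
  calc (1 + r / (2 * t)) * (t ^ (-(3 : ℝ) / 2) * E)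
      = t ^ (-(3 : ℝ) / 2) * E + r / 2 * (t ^ (-(3 : ℝ) / 2) / t * E) := by ring
    _ ≤ 10 ^ (5 / 2 : ℝ) / r ^ 3 + r * (10 ^ (5 / 2 : ℝ) / r ^ 5) := by
      gcongr
      linarith
    _ = 10 ^ (5 / 2 : ℝ) * (1 + r⁻¹) / r ^ 3 := by field_simp

theorem abs_sinh_sub_mul_cosh_le {r : ℝ} (hr : 0 ≤ r) :
    |sinh r - r * cosh r| ≤ r * sinh r := by
  have hsinh : r ≤ sinh r := self_le_sinh_iff.2 hr
  rw [abs_le]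
  constructor
  · have : r * exp (-r) ≤ r * 1 := by gcongr; exact exp_le_one_iff.2 (neg_nonpos.2 hr)
    linarith [congrArg (r * ·) (cosh_sub_sinh r), mul_sub r (cosh r) (sinh r)]
  · have hexp : exp r * (1 - 2 * r) ≤ exp (-r) :=
      calc exp r * (1 - 2 * r) ≤ exp r * exp (-2 * r) := by
            gcongr
            linarith [add_one_le_exp (-2 * r)]
        _ = exp (-r) := by
          rw [← exp_add]
          ring_nf
    rw [sinh_eq, cosh_eq]
    linarith

theorem cosh_mul_tanh_le_sinh {r₀ r : ℝ} (h : r₀ ≤ r) : cosh r * tanh r₀ ≤ sinh r := by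
  have hsub : 0 ≤ sinh (r - r₀) := sinh_nonneg_iff.2 (sub_nonneg.2 h)
  rw [sinh_sub] at hsub
  rw [tanh_eq_sinh_div_cosh, ← mul_div_assoc, div_le_iff₀ (cosh_pos r₀)]
  linarith

/-- The function `r / sinh r`, extended by `1` at `0`: the factor of the heat kernel on `G` that
does not depend on the time. -/
def idDivSinh (r : ℝ) : ℝ := if r = 0 then 1 else r / sinh r

theorem idDivSinh_of_ne_zero {r : ℝ} (hr : r ≠ 0) : idDivSinh r = r / sinh r := if_neg hr

theorem hasDerivAt_idDivSinh {r : ℝ} (hr : r ≠ 0) :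
    HasDerivAt idDivSinh ((sinh r - r * cosh r) / sinh r ^ 2) r := by
  have hquot := (hasDerivAt_id r).div (hasDerivAt_sinh r) (sinh_ne_zero.2 hr)
  rw [id, one_mul] at hquot
  refine hquot.congr_of_eventuallyEq ?_
  filter_upwards [isOpen_ne.mem_nhds hr] with u hu using idDivSinh_of_ne_zero hu

theorem abs_deriv_idDivSinh_le {r : ℝ} (hr : 0 < r) : |deriv idDivSinh r| ≤ idDivSinh r := by
  have hsinh : 0 < sinh r := sinh_pos_iff.2 hr
  rw [(hasDerivAt_idDivSinh hr.ne').deriv, idDivSinh_of_ne_zero hr.ne', abs_div,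
    abs_of_pos (pow_pos hsinh 2)]
  calc |sinh r - r * cosh r| / sinh r ^ 2 ≤ r * sinh r / sinh r ^ 2 := by
        gcongr
        exact abs_sinh_sub_mul_cosh_le hr.le
    _ = r / sinh r := by field_simp

/-- The radial profile of the heat kernel, `p_t = δ^{1/2} · (radialHeat t ∘ r)`; it reduces the
derivatives of `p_t` in `x₁, x₂` to those of `r` and of a function of one variable. -/
def radialHeat (t r : ℝ) : ℝ :=
  (8 * π ^ ((3 : ℝ) / 2))⁻¹ * idDivSinh r * t ^ (-(3 : ℝ) / 2) * exp (-(r ^ 2) / (4 * t))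

theorem heatK_eq_sqrt_deltaG_mul_radialHeat (t : ℝ) :
    heatK t = fun x ↦ √(deltaG x) * radialHeat t (rG x) := by
  ext x
  rw [heatK, radialHeat, idDivSinh]
  ring

theorem hasDerivAt_radialHeat (t : ℝ) {r : ℝ} (hr : r ≠ 0) :
    HasDerivAt (radialHeat t)
      ((8 * π ^ ((3 : ℝ) / 2))⁻¹ * (deriv idDivSinh r - r / (2 * t) * idDivSinh r) *
        (t ^ (-(3 : ℝ) / 2) * exp (-(r ^ 2) / (4 * t)))) r := by
  have hD := (hasDerivAt_idDivSinh hr).differentiableAt.hasDerivAt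
  have hE := (((hasDerivAt_pow 2 r).neg).div_const (4 * t)).exp
  refine (((hD.const_mul (8 * π ^ ((3 : ℝ) / 2))⁻¹).mul_const (t ^ (-(3 : ℝ) / 2))).mul
    hE).congr_deriv ?_
  simp only [Pi.neg_apply]
  push_cast
  ring

theorem abs_deriv_radialHeat_le {r t : ℝ} (hr : 0 < r) (ht : 0 < t) :
    |deriv (radialHeat t) r| ≤
      (8 * π ^ ((3 : ℝ) / 2))⁻¹ * 10 ^ (5 / 2 : ℝ) * (1 + r⁻¹) / (r ^ 2 * sinh r) := by
  have hD : 0 ≤ idDivSinh r := (abs_nonneg _).trans (abs_deriv_idDivSinh_le hr)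
  have hlog : |deriv idDivSinh r - r / (2 * t) * idDivSinh r| ≤
      (1 + r / (2 * t)) * idDivSinh r :=
    calc |deriv idDivSinh r - r / (2 * t) * idDivSinh r|
        ≤ |deriv idDivSinh r| + |r / (2 * t) * idDivSinh r| := abs_sub _ _
      _ ≤ idDivSinh r + r / (2 * t) * idDivSinh r := by
        rw [abs_of_nonneg (a := r / (2 * t) * idDivSinh r) (by positivity)]
        gcongr
        exact abs_deriv_idDivSinh_le hr
      _ = (1 + r / (2 * t)) * idDivSinh r := by ring
  set K := (8 * π ^ ((3 : ℝ) / 2))⁻¹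
  set F := t ^ (-(3 : ℝ) / 2) * exp (-(r ^ 2) / (4 * t))
  have hK : 0 < K := by positivity
  have hF₀ : 0 < F := by positivity
  calc |deriv (radialHeat t) r|
      = K * |deriv idDivSinh r - r / (2 * t) * idDivSinh r| * F := by
        rw [(hasDerivAt_radialHeat t hr.ne').deriv, abs_mul, abs_mul, abs_of_pos hK,
          abs_of_pos hF₀]
    _ ≤ K * ((1 + r / (2 * t)) * idDivSinh r) * F := by gcongr
    _ = K * idDivSinh r * ((1 + r / (2 * t)) * F) := by ring
    _ ≤ K * idDivSinh r * (10 ^ (5 / 2 : ℝ) * (1 + r⁻¹) / r ^ 3) := by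
      gcongr
      exact one_add_mul_rpow_mul_exp_neg_sq_div_le hr ht
    _ = K * 10 ^ (5 / 2 : ℝ) * (1 + r⁻¹) / (r ^ 2 * sinh r) := by
      rw [idDivSinh_of_ne_zero hr.ne']
      field_simp

section Radius

variable {x : G}

theorem one_le_coshArg (ha : 0 < x.2.2) : 1 ≤ coshArg x := by
  have hinv : 2 ≤ x.2.2 + x.2.2⁻¹ := by
    rw [← sub_nonneg]
    have : x.2.2 + x.2.2⁻¹ - 2 = (x.2.2 - 1) ^ 2 / x.2.2 := by field_simp; ring
    rw [this]
    positivity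
  have hsq : 0 ≤ x.2.2⁻¹ * (x.1 ^ 2 + x.2.1 ^ 2) := by positivity
  rw [coshArg]
  linarith

theorem rG_eq_arcosh (x : G) : rG x = arcosh (coshArg x) := rfl

theorem one_lt_coshArg (ha : 0 < x.2.2) (hr : 0 < rG x) : 1 < coshArg x := by
  refine (one_le_coshArg ha).lt_of_ne' fun h ↦ hr.ne' ?_
  rw [rG_eq_arcosh, h, arcosh_zero]

theorem hasDerivAt_coshArg_fst (x : G) :
    HasDerivAt (fun s ↦ coshArg (s, x.2)) (x.1 / x.2.2) x.1 := by
  refine (((((hasDerivAt_pow 2 x.1).add_const (x.2.1 ^ 2)).const_mul x.2.2⁻¹).const_add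
    (x.2.2 + x.2.2⁻¹)).div_const 2).congr_deriv ?_
  push_cast
  ring

theorem hasDerivAt_rG_fst (ha : 0 < x.2.2) (hr : 0 < rG x) :
    HasDerivAt (fun s ↦ rG (s, x.2)) (x.1 / x.2.2 / sinh (rG x)) x.1 := by
  refine ((hasDerivAt_arcosh (one_lt_coshArg ha hr)).comp x.1
    (hasDerivAt_coshArg_fst x)).congr_deriv ?_
  rw [rG_eq_arcosh, sinh_arcosh (one_le_coshArg ha), inv_mul_eq_div]

theorem X1_sqrt_deltaG_mul_comp_rG {φ : ℝ → ℝ} (ha : 0 < x.2.2) (hr : 0 < rG x)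
    (hφ : DifferentiableAt ℝ φ (rG x)) :
    X1 (fun y ↦ √(deltaG y) * φ (rG y)) x = x.1 / x.2.2 * (deriv φ (rG x) / sinh (rG x)) := by
  have hderiv := (hφ.hasDerivAt.comp x.1 (hasDerivAt_rG_fst ha hr)).const_mul √(deltaG x)
  have hδ : √(deltaG x) = x.2.2⁻¹ := by rw [deltaG, sqrt_inv, sqrt_sq ha.le]
  calc X1 (fun y ↦ √(deltaG y) * φ (rG y)) x
      = x.2.2 * (√(deltaG x) * (deriv φ (rG x) * (x.1 / x.2.2 / sinh (rG x)))) :=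
        congrArg (x.2.2 * ·) hderiv.deriv
    _ = x.1 / x.2.2 * (deriv φ (rG x) / sinh (rG x)) := by
      rw [hδ]
      field_simp

theorem rG_swap (u v a : ℝ) : rG (v, u, a) = rG (u, v, a) := by
  simp only [rG, coshArg, add_comm]

theorem normG_swap (u v a : ℝ) : normG (v, u, a) = normG (u, v, a) := by
  simp only [normG, add_comm]

theorem abs_fst_le_normG (x : G) : |x.1| ≤ normG x :=
  abs_le_sqrt (le_add_of_nonneg_right (sq_nonneg _))

end Radius

theorem X2_heatK_swap (t u v a : ℝ) : X2 (heatK t) (v, u, a) = X1 (heatK t) (u, v, a) := by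
  simp only [X1, X2, heatK, deltaG, rG_swap _ v]

theorem abs_X1_heatK_le {x : G} {t : ℝ} (ha : 0 < x.2.2) (hr : 0 < rG x) (ht : 0 < t) :
    |X1 (heatK t) x| ≤ (8 * π ^ ((3 : ℝ) / 2))⁻¹ * 10 ^ (5 / 2 : ℝ) * (1 + (rG x)⁻¹) * |x.1| /
      (x.2.2 * rG x ^ 2 * sinh (rG x) ^ 2) := by
  have hsinh : 0 < sinh (rG x) := sinh_pos_iff.2 hr
  rw [heatK_eq_sqrt_deltaG_mul_radialHeat,
    X1_sqrt_deltaG_mul_comp_rG ha hr (hasDerivAt_radialHeat t hr.ne').differentiableAt,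
    abs_mul, abs_div, abs_div, abs_of_pos ha, abs_of_pos hsinh]
  calc |x.1| / x.2.2 * (|deriv (radialHeat t) (rG x)| / sinh (rG x))
      ≤ |x.1| / x.2.2 * ((8 * π ^ ((3 : ℝ) / 2))⁻¹ * 10 ^ (5 / 2 : ℝ) * (1 + (rG x)⁻¹) /
          (rG x ^ 2 * sinh (rG x)) / sinh (rG x)) := by
        gcongr
        exact abs_deriv_radialHeat_le hr ht
    _ = _ := by
      field_simp

theorem exists_abs_X1_heatK_le {r₀ : ℝ} (hr₀ : 0 < r₀) :
    ∃ C > (0 : ℝ), ∀ x : G, 0 < x.2.2 → r₀ ≤ rG x → ∀ t > (0 : ℝ),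
      |X1 (heatK t) x| ≤ C * normG x / (x.2.2 * rG x ^ 2 * cosh (rG x) ^ 2) := by
  have htanh : 0 < tanh r₀ := by
    rw [tanh_eq_sinh_div_cosh]
    exact div_pos (sinh_pos_iff.2 hr₀) (cosh_pos r₀)
  set K := (8 * π ^ ((3 : ℝ) / 2))⁻¹ * (10 : ℝ) ^ (5 / 2 : ℝ)
  refine ⟨K * (1 + r₀⁻¹) / tanh r₀ ^ 2, by positivity, fun x ha hr t ht ↦ ?_⟩
  have hr_pos : 0 < rG x := hr₀.trans_le hr
  calc |X1 (heatK t) x|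
      ≤ K * (1 + (rG x)⁻¹) * |x.1| / (x.2.2 * rG x ^ 2 * sinh (rG x) ^ 2) :=
        abs_X1_heatK_le ha hr_pos ht
    _ ≤ K * (1 + r₀⁻¹) * normG x / (x.2.2 * rG x ^ 2 * (cosh (rG x) * tanh r₀) ^ 2) := by
      gcongr
      · exact mul_nonneg (by positivity) (sqrt_nonneg _)
      · exact abs_fst_le_normG x
      · exact cosh_mul_tanh_le_sinh hr
    _ = K * (1 + r₀⁻¹) / tanh r₀ ^ 2 * normG x / (x.2.2 * rG x ^ 2 * cosh (rG x) ^ 2) := by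
      field_simp

theorem sup_X12_heatK_large_general {r₀ : ℝ} (hr₀ : 0 < r₀) :
    ∃ C > (0 : ℝ), ∀ x : G, 0 < x.2.2 → r₀ ≤ rG x → ∀ t > (0 : ℝ),
      |X1 (heatK t) x| ≤ C * normG x / (x.2.2 * rG x ^ 2 * Real.cosh (rG x) ^ 2) ∧
      |X2 (heatK t) x| ≤ C * normG x / (x.2.2 * rG x ^ 2 * Real.cosh (rG x) ^ 2) := by
  obtain ⟨C, hC, hX1⟩ := exists_abs_X1_heatK_le hr₀
  refine ⟨C, hC, fun x ha hr t ht ↦ ⟨hX1 x ha hr t ht, ?_⟩⟩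
  obtain ⟨u, v, a⟩ := x
  rw [← rG_swap] at hr
  simpa only [X2_heatK_swap, rG_swap u v, normG_swap u v] using hX1 (v, u, a) ha hr t ht

theorem sup_X12_heatK_large :
    ∃ C > (0 : ℝ), ∀ x : G, 0 < x.2.2 → 1 ≤ rG x → ∀ t > (0 : ℝ),
      |X1 (heatK t) x| ≤ C * normG x / (x.2.2 * rG x ^ 2 * Real.cosh (rG x) ^ 2) ∧
      |X2 (heatK t) x| ≤ C * normG x / (x.2.2 * rG x ^ 2 * Real.cosh (rG x) ^ 2) :=
  sup_X12_heatK_large_general one_pos
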